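/- For every instance 𝓘 of the oblivious knapsack problem in which all items have unit density, the permutation Π returned by the algorithm UniversalUD(𝓘) is a φ-robust universal policy, i.e., v(Opt(𝓘,C)) ≤ φ·v(Π(C)) for every capacity C with 0 ≤ C ≤ l(𝓘), where φ = (1+√5)/2 is the golden ratio. -/

import Mathlib

/-!
Write `Π` for the computed permutation, `Q` for its packing at capacity `C`, `P` for the value of `Q`,
and identify an item with its value (equal to its size). The proof rests on two properties of `Π`,
both invariants of the insertion step (`pairwise_insertAfter`, `detour_insertAfter`):

* if `z` precedes `x` in `Π`, then `x ≤ φ z`;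
* if `z` precedes a smaller item `y` in `Π`, then some `q` with `φ q ≤ z` comes after `z`, and it is
  `y` itself or comes before `y`: at the insertion of `z`, take the item directly behind `z`.

Suppose `φ P < C`, as otherwise `v(S) ≤ C ≤ φ P`. A rejected item did not fit on top of the items
packed before it, so it exceeds `C - P > C / φ²`; hence `S` contains at most two rejected items
(`robust_of_invariants`).

* One rejected item `x`: the items packed before `x` are not all in `S`, since together with `x` they
  overflow `C`. A missing one `z` satisfies `x ≤ φ z`, so
  `v(S) ≤ P - z + x ≤ P + z / φ ≤ φ P`.
* Two rejected items `x`, `y`: there are distinct packed items `z`, `q` with `x ≤ φ z` and `y ≤ φ q`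
  (`exists_distinct_packed`). Both exceed `C / φ³`, and `2 / φ² + 1 / φ³ = 1`, so neither lies
  in `S`. Then `v(S) ≤ P - z - q + x + y ≤ P + (z + q) / φ ≤ φ P`.
-/

/-- The packing of a list of items (a universal policy) for capacity `C`:
scan the list in order, starting from the empty packing, and add an item
whenever its size fits into the remaining capacity. -/
def pack {α R : Type*} [LinearOrder R] [Sub R] (size : α → R) : R → List α → List α
  | _, [] => []
  | C, x :: xs => if size x ≤ C then x :: pack size (C - size x) xs else pack size C xs

/-- The golden ratio `φ = (1 + √5)/2`. -/
noncomputable def phi : ℝ := (1 + Real.sqrt 5) / 2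

/-- Insert `x` into a list immediately after the maximal prefix of elements
satisfying `p`. -/
def insertAfter {α : Type*} (p : α → Prop) [DecidablePred p] (x : α) : List α → List α
  | [] => [x]
  | y :: ys => if p y then y :: insertAfter p x ys else x :: y :: ys

/-- The tie-broken size order on unit-density items: `Prec v t i j` means
`i ≺ j`, i.e. `v i < v j`, or `v i = v j` and `t i < t j`. -/
def Prec {n : ℕ} (v : Fin n → ℚ) (t : Fin n → Fin n) (i j : Fin n) : Prop :=
  v i < v j ∨ (v i = v j ∧ t i < t j)

open Classical in
/-- The algorithm `UniversalUD`: process the items in the order given by `L`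
(increasing with respect to `≺`), starting from the empty sequence; each new
item `x` is inserted immediately after the maximal prefix of the current
sequence consisting of items `y` with `v x < φ · v y`. -/
noncomputable def universalUD {n : ℕ} (v : Fin n → ℚ) (L : List (Fin n)) :
    List (Fin n) :=
  L.foldl (fun acc x =>
    insertAfter (fun y => ((v x : ℚ) : ℝ) < phi * ((v y : ℚ) : ℝ)) x acc) []

theorem phi_sq : phi ^ 2 = phi + 1 := by
  have h : Real.sqrt 5 ^ 2 = 5 := Real.sq_sqrt (by norm_num)
  unfold phi
  nlinarith

theorem one_lt_phi : 1 < phi := by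
  have h : (1 : ℝ) < Real.sqrt 5 := by
    rw [Real.lt_sqrt (by norm_num)]; norm_num
  unfold phi
  linarith

/-! ### The packing -/

theorem pack_append {α R : Type*} [LinearOrder R] [AddCommGroup R] (s : α → R) (A B : List α) :
    ∀ C : R, pack s C (A ++ B) = pack s C A ++ pack s (C - ((pack s C A).map s).sum) B := by
  induction A with
  | nil => intro C; simp [pack]
  | cons a A ih =>
    intro C
    by_cases h : s a ≤ C
    · simp [pack, h, ih, sub_sub]
    · simp [pack, h, ih]

theorem pack_sublist {α R : Type*} [LinearOrder R] [Sub R] (s : α → R) (A : List α) :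
    ∀ C : R, (pack s C A).Sublist A := by
  induction A with
  | nil => intro C; simp [pack]
  | cons a A ih =>
    intro C
    by_cases h : s a ≤ C
    · simpa [pack, h] using ih _
    · simpa [pack, h] using (ih _).cons a

/-- A rejected item `x` overflows the capacity on top of the list `T` of items packed before it. -/
theorem exists_overflow_of_rejected {α : Type*} (s : α → ℚ) (C : ℚ) (M : List α) (hM : M.Nodup)
    (x : α) (hx : x ∈ M) (hxQ : x ∉ pack s C M) :
    ∃ T : List α, T.Nodup ∧ (∀ z ∈ T, z ∈ pack s C M ∧ [z, x].Sublist M) ∧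
      C < (T.map s).sum + s x := by
  obtain ⟨A, B, rfl⟩ := List.append_of_mem hx
  rw [pack_append] at hxQ
  refine ⟨pack s C A, ((pack_sublist s A C).trans (List.sublist_append_left _ _)).nodup hM,
    fun z hz => ⟨?_, ?_⟩, ?_⟩
  · rw [pack_append]
    exact List.mem_append_left _ hz
  · exact (List.singleton_sublist.2 ((pack_sublist s A C).subset hz)).append
      (List.singleton_sublist.2 List.mem_cons_self |>.trans (List.Sublist.refl (x :: B)))
  · by_contra! h
    have h' : s x ≤ C - ((pack s C A).map s).sum := by linarith
    exact hxQ (List.mem_append_right _ (by simp [pack, h']))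

/-! ### Invariants of the insertion step -/

theorem exists_insertAfter_eq {α : Type*} (p : α → Prop) [DecidablePred p] (x : α) (M : List α) :
    ∃ A B, M = A ++ B ∧ insertAfter p x M = A ++ x :: B ∧ (∀ a ∈ A, p a) ∧
      ∀ b ∈ B.head?, ¬ p b := by
  induction M with
  | nil => exact ⟨[], [], by simp [insertAfter]⟩
  | cons y M ih =>
    by_cases h : p y
    · obtain ⟨A, B, h1, h2, h3, h4⟩ := ih
      refine ⟨y :: A, B, by simp [h1], by simp [insertAfter, h, h2], ?_, h4⟩
      simpa [h] using h3
    · exact ⟨[], y :: M, by simp [insertAfter, h]⟩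

/-- Whenever `z` precedes a smaller item `y` in `M`, some item `q` with `φ q ≤ z` comes after `z`
and is `y` or comes before `y`. Precedence in `M` is expressed by sublists. -/
def HasDetours {α : Type*} (w : α → ℝ) (M : List α) : Prop :=
  ∀ z y, [z, y].Sublist M → w y < w z → ∃ q, phi * w q ≤ w z ∧ ([z, q, y].Sublist M ∨ q = y)

open Classical in
theorem pairwise_insertAfter {α : Type*} (w : α → ℝ) (x : α) (hx : 0 ≤ w x) (M : List α)
    (hmax : ∀ a ∈ M, w a ≤ w x) (hM : M.Pairwise fun a b => w b ≤ phi * w a) :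
    (insertAfter (fun y => w x < phi * w y) x M).Pairwise fun a b => w b ≤ phi * w a := by
  obtain ⟨A, B, rfl, h2, h3, -⟩ := exists_insertAfter_eq (fun y => w x < phi * w y) x M
  rw [h2]
  rw [List.pairwise_append] at hM ⊢
  refine ⟨hM.1, List.pairwise_cons.2 ⟨fun b hb => ?_, hM.2.1⟩, fun a ha b hb => ?_⟩
  · have := hmax b (List.mem_append_right _ hb)
    nlinarith [one_lt_phi]
  · rcases List.mem_cons.1 hb with rfl | hb
    · exact (h3 a ha).le
    · exact hM.2.2 a ha b hb

open Classical in
theorem detour_insertAfter {α : Type*} (w : α → ℝ) (x : α) (M : List α) (hxM : x ∉ M)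
    (hmax : ∀ a ∈ M, w a ≤ w x) (hM : HasDetours w M) :
    HasDetours w (insertAfter (fun y => w x < phi * w y) x M) := by
  obtain ⟨A, B, rfl, h2, -, h4⟩ := exists_insertAfter_eq (fun y => w x < phi * w y) x M
  rw [h2]
  have hxA : x ∉ A := fun h => hxM (List.mem_append_left _ h)
  have hxB : x ∉ B := fun h => hxM (List.mem_append_right _ h)
  intro z y hzy hlt
  have hmem : ∀ a ∈ A ++ x :: B, w a ≤ w x := by
    intro a ha
    rcases eq_or_ne a x with rfl | hne
    · exact le_rfl
    · exact hmax a (by simpa [hne] using ha)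
  have hyx : y ≠ x := by
    rintro rfl
    have := hmem z (hzy.subset (by simp))
    linarith
  by_cases hzx : z = x
  · -- the detour of the new item `x` is the item directly behind it
    subst hzx
    have hyB : [y].Sublist B := by
      obtain ⟨l1, l2, h, hl1, hl2⟩ := List.sublist_append_iff.1 hzy
      rcases l1 with _ | ⟨a, l1⟩
      · simp only [List.nil_append] at h
        subst h
        exact List.cons_sublist_cons.1 hl2
      · simp only [List.cons_append, List.cons.injEq] at h
        exact absurd (hl1.subset (by simp [h.1])) hxA
    rcases B with _ | ⟨q, B⟩
    · simp at hyB
    · refine ⟨q, not_lt.1 (h4 q (by simp)), ?_⟩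
      rcases eq_or_ne q y with h | h
      · exact Or.inr h
      · left
        have : [y].Sublist B := by
          rw [List.singleton_sublist] at hyB ⊢
          simpa [h.symm] using hyB
        exact (((this.cons_cons q).cons_cons z)).trans (List.sublist_append_right A _)
  · have hold : [z, y].Sublist (A ++ B) := by
      have := hzy.filter (fun a => decide (a ≠ x))
      have hfA : A.filter (fun a => decide (a ≠ x)) = A :=
        List.filter_eq_self.2 fun a ha => by
          simpa using fun h : a = x => hxA (h ▸ ha)
      have hfB : B.filter (fun a => decide (a ≠ x)) = B :=
        List.filter_eq_self.2 fun a ha => by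
          simpa using fun h : a = x => hxB (h ▸ ha)
      have hfx : (x :: B).filter (fun a => decide (a ≠ x)) = B := by
        rw [List.filter_cons, if_neg (by simp), hfB]
      rw [List.filter_append, hfA, hfx] at this
      simpa [hzx, hyx] using this
    obtain ⟨q, hq, h⟩ := hM z y hold hlt
    refine ⟨q, hq, h.imp_left fun h => h.trans ?_⟩
    exact (List.Sublist.refl A).append (List.sublist_cons_self x B)

open Classical in
theorem universalUD_invariants {n : ℕ} (v : Fin n → ℚ) (hv : ∀ i, 0 ≤ v i) (L : List (Fin n))
    (hnd : L.Nodup) (hs : L.Pairwise fun i j => v i ≤ v j) :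
    (universalUD v L).Perm L ∧
    ((universalUD v L).Pairwise fun a b => (v b : ℝ) ≤ phi * (v a : ℝ)) ∧
    HasDetours (fun i => (v i : ℝ)) (universalUD v L) := by
  induction L using List.reverseRecOn with
  | nil =>
    refine ⟨by simp [universalUD], by simp [universalUD], fun z y h => ?_⟩
    simp [universalUD] at h
  | append_singleton L x ih =>
    have e : universalUD v (L ++ [x]) =
        insertAfter (fun y => ((v x : ℚ) : ℝ) < phi * ((v y : ℚ) : ℝ)) x (universalUD v L) := by
      simp [universalUD]
    rw [List.pairwise_append] at hs
    rw [List.nodup_append] at hnd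
    obtain ⟨hp, hA, hB⟩ := ih hnd.1 hs.1
    have hmax : ∀ a ∈ universalUD v L, (v a : ℝ) ≤ v x := fun a ha => by
      exact_mod_cast hs.2.2 a (hp.mem_iff.1 ha) x (by simp)
    have hxM : x ∉ universalUD v L := fun h =>
      hnd.2.2 x (hp.mem_iff.1 h) x (by simp) rfl
    rw [e]
    refine ⟨?_, pairwise_insertAfter (fun i => (v i : ℝ)) x (by exact_mod_cast hv x) _ hmax hA,
      detour_insertAfter (fun i => (v i : ℝ)) x _ hxM hmax hB⟩
    obtain ⟨A, B, h1, h2, -, -⟩ := exists_insertAfter_eq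
      (fun y => ((v x : ℚ) : ℝ) < phi * ((v y : ℚ) : ℝ)) x (universalUD v L)
    rw [h2]
    rw [h1] at hp
    exact List.perm_middle.trans ((hp.cons x).trans (List.perm_append_singleton x L).symm)

/-! ### Robustness from the invariants -/

/-- Two rejected items `x`, `y` that fit together can be charged to two distinct packed items.
If both were preceded by a single common packed item `z`, then `z > C - x ≥ y`, and the detour from
`z` to `y` passes an item too small to be rejected. -/
theorem exists_distinct_packed {α : Type*} (w : α → ℝ) (hw : ∀ i, 0 < w i) (M : List α)
    (hA : M.Pairwise fun a b => w b ≤ phi * w a) (hB : HasDetours w M) (Q : Finset α) (C : ℝ)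
    (hrej : ∀ x ∉ Q, ∃ T : List α, T.Nodup ∧ (∀ z ∈ T, z ∈ Q ∧ [z, x].Sublist M) ∧
      C < (T.map w).sum + w x)
    (hP : phi * ∑ i ∈ Q, w i < C) (hbig : ∀ x ∉ Q, C - ∑ i ∈ Q, w i < w x)
    (x y : α) (hx : x ∉ Q) (hy : y ∉ Q) (hxy : w x + w y ≤ C) :
    ∃ z ∈ Q, ∃ q ∈ Q, z ≠ q ∧ w x ≤ phi * w z ∧ w y ≤ phi * w q := by
  have prec : ∀ {a b}, [a, b].Sublist M → w b ≤ phi * w a := fun h => by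
    simpa using hA.sublist h
  have hwx := hw x
  have hwy := hw y
  obtain ⟨T, hTn, hT, hTC⟩ := hrej x hx
  obtain ⟨U, hUn, hU, hUC⟩ := hrej y hy
  rcases T with _ | ⟨z, T⟩
  · simp at hTC; linarith
  rcases U with _ | ⟨q, U⟩
  · simp at hUC; linarith
  obtain ⟨hzQ, hzx⟩ := hT z (by simp)
  obtain ⟨hqQ, hqy⟩ := hU q (by simp)
  by_cases hzq : z = q
  swap
  · exact ⟨z, hzQ, q, hqQ, hzq, prec hzx, prec hqy⟩
  subst hzq
  rcases T with _ | ⟨z', T⟩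
  swap
  · obtain ⟨h1, h2⟩ := hT z' (by simp)
    refine ⟨z', h1, z, hzQ, ?_, prec h2, prec hqy⟩
    rintro rfl
    simp at hTn
  have hyz : w y < w z := by
    simp at hTC; linarith
  obtain ⟨q, hq, hor⟩ := hB z y hqy hyz
  have hzP : w z ≤ ∑ i ∈ Q, w i :=
    Finset.single_le_sum (f := w) (fun i _ => (hw i).le) hzQ
  -- `q ≤ z / φ < C / φ²`, whereas rejected items exceed `C / φ²`
  have hqQ' : q ∈ Q := by
    by_contra hcon
    have := hbig q hcon
    have h1 := phi_sq
    have h2 := one_lt_phi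
    nlinarith
  rcases hor with h | rfl
  · refine ⟨z, hzQ, q, hqQ', ?_, prec hzx, prec ((List.sublist_cons_self z [q, y]).trans h)⟩
    rintro rfl
    nlinarith [hw z, one_lt_phi]
  · exact absurd hqQ' hy

/-- A packing `Q` along a sequence with both invariants, in which every rejected item overflows the
capacity on top of the packed items preceding it, is `φ`-competitive. -/
theorem robust_of_invariants {α : Type*} [DecidableEq α] (w : α → ℝ) (hw : ∀ i, 0 < w i)
    (M : List α) (hA : M.Pairwise fun a b => w b ≤ phi * w a) (hB : HasDetours w M)
    (Q S : Finset α) (C : ℝ) (hS : ∑ i ∈ S, w i ≤ C)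
    (hrej : ∀ x ∉ Q, ∃ T : List α, T.Nodup ∧ (∀ z ∈ T, z ∈ Q ∧ [z, x].Sublist M) ∧
      C < (T.map w).sum + w x) :
    ∑ i ∈ S, w i ≤ phi * ∑ i ∈ Q, w i := by
  have h1 := phi_sq
  have h2 := one_lt_phi
  by_cases hP : C ≤ phi * ∑ i ∈ Q, w i
  · exact hS.trans hP
  push Not at hP
  have sumle : ∀ {X Y : Finset α}, X ⊆ Y → ∑ i ∈ X, w i ≤ ∑ i ∈ Y, w i := fun h =>
    Finset.sum_le_sum_of_subset_of_nonneg h fun i _ _ => (hw i).le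
  have hbig : ∀ x ∉ Q, C - ∑ i ∈ Q, w i < w x := by
    intro x hx
    obtain ⟨T, hTn, hT, hTC⟩ := hrej x hx
    have : (T.map w).sum ≤ ∑ i ∈ Q, w i := by
      rw [← List.sum_toFinset w hTn]
      exact sumle fun z hz => (hT z (List.mem_toFinset.1 hz)).1
    linarith
  have hSs : ∑ i ∈ S ∩ Q, w i + ∑ i ∈ S \ Q, w i = ∑ i ∈ S, w i :=
    Finset.sum_inter_add_sum_sdiff S Q w
  have hQs : ∑ i ∈ S ∩ Q, w i + ∑ i ∈ Q \ S, w i = ∑ i ∈ Q, w i := by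
    rw [Finset.inter_comm]; exact Finset.sum_inter_add_sum_sdiff Q S w
  have hQ0 : 0 ≤ ∑ i ∈ S ∩ Q, w i := Finset.sum_nonneg fun i _ => (hw i).le
  have memr : ∀ {a}, a ∈ S \ Q → a ∈ S ∧ a ∉ Q := fun h => Finset.mem_sdiff.1 h
  rcases Nat.lt_or_ge 2 (S \ Q).card with hc | hc
  · -- three rejected items would exceed the capacity, as `3 / φ² > 1`
    exfalso
    obtain ⟨a, ha, b, hb, c, hc, hab, hac, hbc⟩ := Finset.two_lt_card.1 hc
    have hsub : ({a, b, c} : Finset α) ⊆ S \ Q := by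
      intro i hi
      simp only [Finset.mem_insert, Finset.mem_singleton] at hi
      rcases hi with rfl | rfl | rfl <;> assumption
    have hle := sumle hsub
    rw [Finset.sum_insert (by simp [hab, hac]), Finset.sum_pair hbc] at hle
    have := hbig a (memr ha).2
    have := hbig b (memr hb).2
    have := hbig c (memr hc).2
    nlinarith [hw a]
  have hcase : (S \ Q).card = 0 ∨ (S \ Q).card = 1 ∨ (S \ Q).card = 2 := by omega
  rcases hcase with hc | hc | hc
  · rw [Finset.card_eq_zero] at hc
    rw [hc, Finset.sum_empty] at hSs
    have hD0 : 0 ≤ ∑ i ∈ Q \ S, w i := Finset.sum_nonneg fun i _ => (hw i).le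
    nlinarith
  · obtain ⟨x, hx⟩ := Finset.card_eq_one.1 hc
    obtain ⟨hxS, hxQ⟩ := memr (a := x) (by simp [hx])
    rw [hx, Finset.sum_singleton] at hSs
    obtain ⟨T, hTn, hT, hTC⟩ := hrej x hxQ
    obtain ⟨z, hzT, hzS⟩ : ∃ z ∈ T, z ∉ S := by
      by_contra! hcon
      have : (T.map w).sum ≤ ∑ i ∈ S ∩ Q, w i := by
        rw [← List.sum_toFinset w hTn]
        exact sumle fun z hz => Finset.mem_inter.2
          ⟨hcon z (List.mem_toFinset.1 hz), (hT z (List.mem_toFinset.1 hz)).1⟩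
      linarith
    obtain ⟨hzQ, hzx⟩ := hT z hzT
    have hxz : w x ≤ phi * w z := by simpa using hA.sublist hzx
    have hz : w z ≤ ∑ i ∈ Q \ S, w i :=
      Finset.single_le_sum (f := w) (fun i _ => (hw i).le) (Finset.mem_sdiff.2 ⟨hzQ, hzS⟩)
    nlinarith
  · obtain ⟨x, y, hxy, hx⟩ := Finset.card_eq_two.1 hc
    obtain ⟨hxS, hxQ⟩ := memr (a := x) (by simp [hx])
    obtain ⟨hyS, hyQ⟩ := memr (a := y) (by simp [hx])
    rw [hx, Finset.sum_pair hxy] at hSs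
    have hbx := hbig x hxQ
    have hby := hbig y hyQ
    obtain ⟨z, hzQ, q, hqQ, hzq, hxz, hyq⟩ := exists_distinct_packed w hw M hA hB Q C hrej hP hbig
      x y hxQ hyQ (by linarith)
    have notS : ∀ a b, a ∈ Q → b ∉ Q → w b ≤ phi * w a → a ∉ S := by
      intro a b ha hb hba haS
      have hbb := hbig b hb
      have : w a ≤ ∑ i ∈ S ∩ Q, w i :=
        Finset.single_le_sum (f := w) (fun i _ => (hw i).le) (Finset.mem_inter.2 ⟨haS, ha⟩)
      have e1 : C - ∑ i ∈ Q, w i < phi * w a := by linarith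
      have e2 : w a + 2 * (C - ∑ i ∈ Q, w i) < C := by linarith
      -- multiplied by `φ`, `e2` contradicts `e1` and `e4`, as `1 + 2 φ = φ³`
      have e3 : phi * (w a + 2 * (C - ∑ i ∈ Q, w i)) < phi * C :=
        mul_lt_mul_of_pos_left e2 (by linarith)
      have e4 : C < (phi + 1) * (C - ∑ i ∈ Q, w i) := by
        have h3 := mul_lt_mul_of_pos_left hP (show 0 < phi by linarith)
        have h4 : phi * (phi * ∑ i ∈ Q, w i) = (phi + 1) * ∑ i ∈ Q, w i := by
          rw [← h1]; ring
        linarith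
      have e5 : phi * C < phi * ((phi + 1) * (C - ∑ i ∈ Q, w i)) :=
        mul_lt_mul_of_pos_left e4 (by linarith)
      have e6 : phi * ((phi + 1) * (C - ∑ i ∈ Q, w i)) = (1 + 2 * phi) * (C - ∑ i ∈ Q, w i) := by
        linear_combination (C - ∑ i ∈ Q, w i) * h1
      linarith
    have hz := notS z x hzQ hxQ hxz
    have hq := notS q y hqQ hyQ hyq
    have hsub : ({z, q} : Finset α) ⊆ Q \ S := by
      intro i hi
      simp only [Finset.mem_insert, Finset.mem_singleton] at hi
      rcases hi with rfl | rfl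
      · exact Finset.mem_sdiff.2 ⟨hzQ, hz⟩
      · exact Finset.mem_sdiff.2 ⟨hqQ, hq⟩
    have hle := sumle hsub
    rw [Finset.sum_pair hzq] at hle
    nlinarith

/-- For every unit-density instance, the permutation returned
by `UniversalUD(𝓘)` is a `φ`-robust universal policy: for every capacity
`0 ≤ C ≤ l(𝓘)` and every feasible set `S` (in particular the optimal one),
`v(S) ≤ φ · v(Π(C))`. -/
theorem universalUD_phi_robust {n : ℕ} (v l : Fin n → ℚ)
    (hv : ∀ i, 0 ≤ v i) (hl : ∀ i, 0 < l i) (hud : ∀ i, v i = l i)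
    (t : Fin n → Fin n) (ht : Function.Bijective t)
    (L : List (Fin n)) (hLnd : L.Nodup) (hLall : ∀ i, i ∈ L)
    (hLsorted : L.Pairwise (Prec v t))
    (C : ℚ) (hC0 : 0 ≤ C) (hC1 : C ≤ ∑ i, l i)
    (S : Finset (Fin n)) (hS : ∑ i ∈ S, l i ≤ C) :
    ((∑ i ∈ S, v i : ℚ) : ℝ)
      ≤ phi * ((((pack l C (universalUD v L)).map v).sum : ℚ) : ℝ) := by
  obtain rfl : v = l := funext hud
  obtain ⟨hp, hA, hB⟩ := universalUD_invariants v hv L hLnd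
    (hLsorted.imp fun h => h.elim le_of_lt fun h => h.1.le)
  have hnd : (universalUD v L).Nodup := hp.nodup_iff.2 hLnd
  have hQnd := (pack_sublist v (universalUD v L) C).nodup hnd
  rw [← List.sum_toFinset v hQnd]
  push_cast
  refine robust_of_invariants (fun i => (v i : ℝ)) (fun i => by exact_mod_cast hl i) _ hA hB _ S C
    (by exact_mod_cast hS) fun x hx => ?_
  obtain ⟨T, hTn, hT, hTC⟩ := exists_overflow_of_rejected v C _ hnd x (hp.mem_iff.2 (hLall x))
    (fun h => hx (List.mem_toFinset.2 h))
  refine ⟨T, hTn, fun z hz => ⟨List.mem_toFinset.2 (hT z hz).1, (hT z hz).2⟩, ?_⟩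
  rw [← List.sum_toFinset _ hTn] at hTC ⊢
  exact_mod_cast hTC
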